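/- Let K be a number field and let S be a subset of M containing infinitely many ideals with |S(x^{1/2})| = o(|S(x)|) as x → ∞. Suppose there exist a constant β with 0 < β ≤ 1, a function y = y(x) with 1 < y(x) < x^β, and real constants λ_p for each prime ideal p (with e_p(x) and e_{p_1⋯p_u}(x) defined by the density relations) such that: (a) for each m ∈ S(x), the number of prime ideals p with N(p) > x^β and p | m is O_β(1); (b) Σ_{y < N(p) ≤ x^β} λ_p = o((log log x)^{1/2}); (c) Σ_{y < N(p) ≤ x^β} |e_p(x)| = o((log log x)^{1/2}); (d) Σ_{N(p) ≤ y} λ_p = log log x + o((log log x)^{1/2}); (e) Σ_{N(p) ≤ y} λ_p^2 = o((log log x)^{1/2}); (f) for every r ∈ ℕ and every integer u with 1 ≤ u ≤ r, the sum of |e_{p_1⋯p_u}(x)| over all u-tuples (p_1, …, p_u) of distinct prime ideals with N(p_i) ≤ y for all i is o((log log x)^{-r/2}). Then for every γ ∈ ℝ, lim_{x → ∞} (1/|S(x)|) · |{m ∈ S(x) : N(m) ≥ 3, (ω(m) − log log N(m)) / √(log log N(m)) ≤ γ}| = Φ(γ). -/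

import Mathlib

open Filter MeasureTheory Topology
open scoped BigOperators

noncomputable section

variable (K : Type) [Field K] [NumberField K]

/-- The standard Gaussian distribution function Φ. -/
def gaussPhi (γ : ℝ) : ℝ :=
  (Real.sqrt (2 * Real.pi))⁻¹ * ∫ u in Set.Iic γ, Real.exp (-u ^ 2 / 2)

/-- Number of distinct prime ideal divisors of an ideal. -/
def omegaI (m : Ideal (NumberField.RingOfIntegers K)) : ℕ :=
  Nat.card {p : Ideal (NumberField.RingOfIntegers K) // p.IsPrime ∧ p ∣ m}

/-- The number of elements of `S` with norm at most `x`. -/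
def countS (S : Set (Ideal (NumberField.RingOfIntegers K))) (x : ℝ) : ℕ :=
  Nat.card {m : Ideal (NumberField.RingOfIntegers K) //
    m ∈ S ∧ (Ideal.absNorm m : ℝ) ≤ x}

/-- Taylor bound for `exp (i u)`. -/
lemma ek_exp_taylor (n : ℕ) (u : ℝ) :
    ‖Complex.exp (u * Complex.I) - ∑ k ∈ Finset.range n, (u * Complex.I) ^ k / (k.factorial : ℂ)‖
      ≤ |u| ^ n / (n.factorial : ℝ) := by
  induction n generalizing u with
  | zero => simp
  | succ n ih =>
    let f : ℝ → ℂ := fun s => Complex.exp ((s * u : ℝ) * Complex.I) -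
      ∑ k ∈ Finset.range (n + 1), ((s * u : ℝ) * Complex.I) ^ k / (k.factorial : ℂ)
    let f' : ℝ → ℂ := fun s => (u * Complex.I) * (Complex.exp ((s * u : ℝ) * Complex.I) -
      ∑ k ∈ Finset.range n, ((s * u : ℝ) * Complex.I) ^ k / (k.factorial : ℂ))
    have hlin : ∀ s : ℝ, HasDerivAt (fun s : ℝ => ((s * u : ℝ) : ℂ) * Complex.I)
        (u * Complex.I) s := by
      intro s
      have h1 : HasDerivAt (fun s : ℝ => s * u) u s := by
        simpa using (hasDerivAt_id s).mul_const u
      exact (h1.ofReal_comp).mul_const Complex.I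
    have hder : ∀ s, HasDerivAt f (f' s) s := by
      intro s
      have h1 := (hlin s).cexp
      have h2 : HasDerivAt (fun s : ℝ => ∑ k ∈ Finset.range (n + 1),
          ((s * u : ℝ) * Complex.I) ^ k / (k.factorial : ℂ))
          (∑ k ∈ Finset.range (n + 1),
            ((k : ℂ) * ((s * u : ℝ) * Complex.I) ^ (k - 1) * (u * Complex.I)) /
              (k.factorial : ℂ)) s := by
        apply HasDerivAt.fun_sum
        intro k _
        exact ((hlin s).fun_pow k).div_const _
      have h3 := h1.sub h2
      have e : f' s = Complex.exp ((s * u : ℝ) * Complex.I) * (u * Complex.I) -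
          (∑ k ∈ Finset.range (n + 1),
            ((k : ℂ) * ((s * u : ℝ) * Complex.I) ^ (k - 1) * (u * Complex.I)) /
              (k.factorial : ℂ)) := by
        rw [Finset.sum_range_succ']
        simp only [f', mul_sub, Finset.mul_sum]
        congr 1
        · ring
        · simp only [Nat.cast_zero, zero_mul, zero_div, add_zero]
          apply Finset.sum_congr rfl
          intro k _
          have : ((k + 1).factorial : ℂ) = (k + 1) * k.factorial := by
            rw [Nat.factorial_succ]; push_cast; ring
          have hk : (k : ℂ) + 1 ≠ 0 := Nat.cast_add_one_ne_zero k
          have hk' : (k.factorial : ℂ) ≠ 0 := by exact_mod_cast k.factorial_ne_zero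
          rw [this]
          simp only [Nat.add_sub_cancel]
          push_cast
          field_simp
      rw [e]
      exact h3
    have hB : ∀ s : ℝ, HasDerivAt (fun s : ℝ => s ^ (n + 1) * |u| ^ (n + 1) / ((n + 1).factorial : ℝ))
        (s ^ n * |u| ^ (n + 1) / (n.factorial : ℝ)) s := by
      intro s
      have := (((hasDerivAt_id s).fun_pow (n + 1)).mul_const (|u| ^ (n + 1))).div_const
        ((n + 1).factorial : ℝ)
      have hk : (n : ℝ) + 1 ≠ 0 := Nat.cast_add_one_ne_zero n
      have e : s ^ n * |u| ^ (n + 1) / (n.factorial : ℝ) =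
          ((n + 1 : ℕ) : ℝ) * id s ^ (n + 1 - 1) * 1 * |u| ^ (n + 1) / ((n + 1).factorial : ℝ) := by
        rw [Nat.factorial_succ]
        simp only [Nat.add_sub_cancel, id]
        push_cast
        field_simp
      rw [e]
      exact this
    have key := image_norm_le_of_norm_deriv_right_le_deriv_boundary (f := f) (f' := f')
      (a := 0) (b := 1) (fun s _ => (hder s).continuousAt.continuousWithinAt)
      (fun s _ => (hder s).hasDerivWithinAt) (ha := by
        simp [f, Finset.sum_range_succ']) hB (by
        intro s hs
        simp only [f', norm_mul, Complex.norm_real, Complex.norm_I, mul_one, Real.norm_eq_abs]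
        calc |u| * _ ≤ |u| * (|s * u| ^ n / (n.factorial : ℝ)) := by
              gcongr
              exact ih (s * u)
          _ = s ^ n * |u| ^ (n + 1) / (n.factorial : ℝ) := by
              rw [abs_mul, abs_of_nonneg hs.1]; ring)
    have := key (x := 1) (by simp)
    simpa [f] using this

lemma ek_cf_single {δ : Type*} (t : ℝ) (s : Finset δ) (w X : δ → ℝ) (hw : ∀ a ∈ s, 0 ≤ w a) (n : ℕ) :
    ‖∑ a ∈ s, (w a : ℂ) * Complex.exp ((t * X a : ℝ) * Complex.I) -
      ∑ k ∈ Finset.range (2 * n), ((t * Complex.I) ^ k / (k.factorial : ℂ)) *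
        ((∑ a ∈ s, w a * X a ^ k : ℝ) : ℂ)‖ ≤
    |t| ^ (2 * n) / ((2 * n).factorial : ℝ) * ∑ a ∈ s, w a * X a ^ (2 * n) := by
  have e1 : ∑ a ∈ s, (w a : ℂ) * Complex.exp ((t * X a : ℝ) * Complex.I) -
      ∑ k ∈ Finset.range (2 * n), ((t * Complex.I) ^ k / (k.factorial : ℂ)) *
        ((∑ a ∈ s, w a * X a ^ k : ℝ) : ℂ) =
      ∑ a ∈ s, (w a : ℂ) * (Complex.exp ((t * X a : ℝ) * Complex.I) -
        ∑ k ∈ Finset.range (2 * n), ((t * X a : ℝ) * Complex.I) ^ k / (k.factorial : ℂ)) := by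
    simp only [mul_sub, Finset.sum_sub_distrib]
    congr 1
    push_cast
    simp only [Finset.mul_sum]
    rw [Finset.sum_comm]
    apply Finset.sum_congr rfl; intro a _
    apply Finset.sum_congr rfl; intro k _
    ring
  rw [e1, Finset.mul_sum]
  refine (norm_sum_le _ _).trans (Finset.sum_le_sum fun a ha => ?_)
  rw [norm_mul, Complex.norm_real, Real.norm_of_nonneg (hw a ha)]
  calc w a * _ ≤ w a * (|t * X a| ^ (2 * n) / ((2 * n).factorial : ℝ)) := by
        gcongr
        · exact hw a ha
        · exact ek_exp_taylor (2 * n) (t * X a)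
    _ = _ := by
        rw [abs_mul, mul_pow]
        have : |X a| ^ (2 * n) = X a ^ (2 * n) := (even_two_mul n).pow_abs _
        rw [this]; ring

/-- Comparison of characteristic functions through moments. -/
lemma ek_cf_compare {ι α β : Type*} (l : Filter ι)
    (s : ι → Finset α) (w X : ι → α → ℝ) (s' : ι → Finset β) (w' X' : ι → β → ℝ)
    (hw : ∀ᶠ x in l, ∀ a ∈ s x, 0 ≤ w x a) (hw' : ∀ᶠ x in l, ∀ a ∈ s' x, 0 ≤ w' x a)
    (hmom : ∀ k : ℕ, Tendsto (fun x => ∑ a ∈ s x, w x a * X x a ^ k -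
      ∑ a ∈ s' x, w' x a * X' x a ^ k) l (𝓝 0))
    (hexp : ∀ t : ℝ, ∃ C : ℝ, ∀ᶠ x in l, ∑ a ∈ s' x, w' x a * Real.exp (t * X' x a) ≤ C)
    (t : ℝ) :
    Tendsto (fun x => ∑ a ∈ s x, (w x a : ℂ) * Complex.exp ((t * X x a : ℝ) * Complex.I) -
      ∑ a ∈ s' x, (w' x a : ℂ) * Complex.exp ((t * X' x a : ℝ) * Complex.I)) l (𝓝 0) := by
  set r : ℝ := 2 * |t| + 1 with hr
  have hrpos : 0 < r := by positivity
  obtain ⟨C1, hC1⟩ := hexp r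
  obtain ⟨C2, hC2⟩ := hexp (-r)
  set M : ℝ := |C1| + |C2| + 1 with hM
  have hMpos : 0 < M := by positivity
  have hlim4 : Tendsto (fun n : ℕ => 2 * M * ((1 / 2 : ℝ) ^ 2) ^ n) atTop (𝓝 0) := by
    have := (tendsto_pow_atTop_nhds_zero_of_lt_one (r := (1 / 2 : ℝ) ^ 2) (by norm_num)
      (by norm_num)).const_mul (2 * M)
    simpa using this
  rw [Metric.tendsto_nhds]
  intro ε hε
  obtain ⟨n, hn⟩ := (hlim4.eventually (gt_mem_nhds (half_pos hε))).exists
  have hD : Tendsto (fun x => ∑ k ∈ Finset.range (2 * n + 1), |t| ^ k / (k.factorial : ℝ) *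
      |∑ a ∈ s x, w x a * X x a ^ k - ∑ a ∈ s' x, w' x a * X' x a ^ k|) l (𝓝 0) := by
    rw [show (0 : ℝ) = ∑ k ∈ Finset.range (2 * n + 1), |t| ^ k / (k.factorial : ℝ) * |0| by simp]
    exact tendsto_finsetSum _ fun k _ => ((hmom k).abs).const_mul _
  filter_upwards [hw, hw', hC1, hC2, hD.eventually (gt_mem_nhds (half_pos hε))] with
    x h1 h2 h3 h4 h5
  have a1 := ek_cf_single t (s x) (w x) (X x) h1 n
  have a2 := ek_cf_single t (s' x) (w' x) (X' x) h2 n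
  set φ := ∑ a ∈ s x, (w x a : ℂ) * Complex.exp ((t * X x a : ℝ) * Complex.I)
  set φ' := ∑ a ∈ s' x, (w' x a : ℂ) * Complex.exp ((t * X' x a : ℝ) * Complex.I)
  set m : ℕ → ℝ := fun k => ∑ a ∈ s x, w x a * X x a ^ k with hm
  set m' : ℕ → ℝ := fun k => ∑ a ∈ s' x, w' x a * X' x a ^ k with hm'
  change ‖φ - ∑ k ∈ Finset.range (2 * n), ((t * Complex.I) ^ k / (k.factorial : ℂ)) *
          ((m k : ℝ) : ℂ)‖ ≤ |t| ^ (2 * n) / ((2 * n).factorial : ℝ) * m (2 * n) at a1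
  change ‖φ' - ∑ k ∈ Finset.range (2 * n), ((t * Complex.I) ^ k / (k.factorial : ℂ)) *
          ((m' k : ℝ) : ℂ)‖ ≤ |t| ^ (2 * n) / ((2 * n).factorial : ℝ) * m' (2 * n) at a2
  change ∑ k ∈ Finset.range (2 * n + 1), |t| ^ k / (k.factorial : ℝ) * |m k - m' k| < ε / 2 at h5
  rw [Finset.sum_range_succ] at h5
  have a3 : ‖∑ k ∈ Finset.range (2 * n), ((t * Complex.I) ^ k / (k.factorial : ℂ)) *
          ((m k : ℝ) : ℂ) - ∑ k ∈ Finset.range (2 * n), ((t * Complex.I) ^ k / (k.factorial : ℂ)) *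
          ((m' k : ℝ) : ℂ)‖ ≤ ∑ k ∈ Finset.range (2 * n),
            |t| ^ k / (k.factorial : ℝ) * |m k - m' k| := by
    rw [← Finset.sum_sub_distrib]
    refine (norm_sum_le _ _).trans (Finset.sum_le_sum fun k _ => ?_)
    rw [← mul_sub, ← Complex.ofReal_sub, norm_mul, Complex.norm_real, Real.norm_eq_abs, norm_div,
      norm_pow, norm_mul]
    simp
  have a4 : m' (2 * n) / ((2 * n).factorial : ℝ) * r ^ (2 * n) ≤ M := by
    have : m' (2 * n) / ((2 * n).factorial : ℝ) * r ^ (2 * n) ≤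
        ∑ a ∈ s' x, w' x a * Real.exp (r * X' x a) +
        ∑ a ∈ s' x, w' x a * Real.exp (-r * X' x a) := by
      rw [← Finset.sum_add_distrib, hm', Finset.sum_div, Finset.sum_mul]
      refine Finset.sum_le_sum fun a ha => ?_
      rw [← mul_add]
      calc w' x a * X' x a ^ (2 * n) / ((2 * n).factorial : ℝ) * r ^ (2 * n)
          = w' x a * (|r * X' x a| ^ (2 * n) / ((2 * n).factorial : ℝ)) := by
            rw [(even_two_mul n).pow_abs]; ring
        _ ≤ _ := by
          apply mul_le_mul_of_nonneg_left _ (h2 a ha)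
          refine (Real.pow_div_factorial_le_exp _ (abs_nonneg _) _).trans ?_
          rcases abs_cases (r * X' x a) with ⟨h, _⟩ | ⟨h, _⟩ <;> rw [h]
          · have := Real.exp_pos (-r * X' x a); linarith
          · have := Real.exp_pos (r * X' x a); rw [← neg_mul]; linarith
    have b1 := le_abs_self C1
    have b2 := le_abs_self C2
    linarith
  have a5 : |t| ^ (2 * n) / ((2 * n).factorial : ℝ) * m' (2 * n) ≤ M * ((1 / 2 : ℝ) ^ 2) ^ n := by
    have ht : |t| ≤ (1 / 2) * r := by rw [hr]; linarith
    have hm0 : 0 ≤ m' (2 * n) := Finset.sum_nonneg fun a ha =>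
      mul_nonneg (h2 a ha) ((even_two_mul n).pow_nonneg _)
    calc |t| ^ (2 * n) / ((2 * n).factorial : ℝ) * m' (2 * n)
        ≤ ((1 / 2) * r) ^ (2 * n) / ((2 * n).factorial : ℝ) * m' (2 * n) := by gcongr
      _ = (m' (2 * n) / ((2 * n).factorial : ℝ) * r ^ (2 * n)) * ((1 / 2 : ℝ) ^ 2) ^ n := by
        rw [mul_pow, pow_mul (1/2 : ℝ) 2 n]; ring
      _ ≤ _ := by gcongr
  have a6 : |t| ^ (2 * n) / ((2 * n).factorial : ℝ) * m (2 * n) ≤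
      |t| ^ (2 * n) / ((2 * n).factorial : ℝ) * |m (2 * n) - m' (2 * n)| +
      |t| ^ (2 * n) / ((2 * n).factorial : ℝ) * m' (2 * n) := by
    rw [← mul_add]
    gcongr
    have := le_abs_self (m (2 * n) - m' (2 * n)); linarith
  rw [dist_zero_right]
  set p := ∑ k ∈ Finset.range (2 * n), ((t * Complex.I) ^ k / (k.factorial : ℂ)) * ((m k : ℝ) : ℂ)
  set p' := ∑ k ∈ Finset.range (2 * n), ((t * Complex.I) ^ k / (k.factorial : ℂ)) * ((m' k : ℝ) : ℂ)
  have a7 : ‖φ - φ'‖ ≤ ‖φ - p‖ + ‖p - p'‖ + ‖φ' - p'‖ := by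
    have : φ - φ' = (φ - p) + (p - p') - (φ' - p') := by ring
    rw [this]
    exact (norm_sub_le _ _).trans (by gcongr; exact norm_add_le _ _)
  linarith

/-- Weight of a subset in the independent Bernoulli model. -/
def ekW {β : Type*} [DecidableEq β] (P : Finset β) (lam : β → ℝ) (T : Finset β) : ℝ :=
  (∏ p ∈ T, lam p) * ∏ p ∈ P \ T, (1 - lam p)

lemma ekW_nonneg {β : Type*} [DecidableEq β] (P : Finset β) (lam : β → ℝ)
    (h : ∀ p ∈ P, 0 ≤ lam p ∧ lam p ≤ 1) (T : Finset β) (hT : T ∈ P.powerset) :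
    0 ≤ ekW P lam T := by
  rw [Finset.mem_powerset] at hT
  refine mul_nonneg (Finset.prod_nonneg fun p hp => (h p (hT hp)).1)
    (Finset.prod_nonneg fun p hp => ?_)
  have := (h p (Finset.mem_sdiff.1 hp).1).2
  linarith

lemma ekW_gen {β : Type*} [DecidableEq β] (P : Finset β) (lam : β → ℝ) (z : ℂ) :
    ∑ T ∈ P.powerset, (ekW P lam T : ℂ) * z ^ T.card = ∏ p ∈ P, (1 + lam p * (z - 1)) := by
  have : ∀ p ∈ P, (1 + (lam p : ℂ) * (z - 1)) = lam p * z + (1 - lam p) := fun p _ => by ring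
  rw [Finset.prod_congr rfl this, Finset.prod_add]
  refine Finset.sum_congr rfl fun T _ => ?_
  rw [ekW, Finset.prod_mul_distrib, Finset.prod_const]
  push_cast
  ring

lemma ekW_gen_real {β : Type*} [DecidableEq β] (P : Finset β) (lam : β → ℝ) (z : ℝ) :
    ∑ T ∈ P.powerset, ekW P lam T * z ^ T.card = ∏ p ∈ P, (1 + lam p * (z - 1)) := by
  have := ekW_gen P lam z
  exact_mod_cast this

lemma ekW_super {β : Type*} [DecidableEq β] (P : Finset β) (lam : β → ℝ) (U : Finset β)
    (hU : U ⊆ P) :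
    ∑ T ∈ P.powerset, ekW P lam T * (if U ⊆ T then 1 else 0) = ∏ p ∈ U, lam p := by
  have e1 : ∏ p ∈ P, (lam p + (1 - lam p) * (if p ∈ U then 0 else 1)) = ∏ p ∈ U, lam p := by
    rw [← Finset.prod_sdiff hU]
    rw [Finset.prod_eq_one, one_mul]
    · exact Finset.prod_congr rfl fun p hp => by simp [hp]
    · intro p hp
      simp [(Finset.mem_sdiff.1 hp).2]
  rw [← e1, Finset.prod_add]
  refine Finset.sum_congr rfl fun T _ => ?_
  rw [ekW, Finset.prod_mul_distrib, mul_assoc]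
  congr 2
  split_ifs with h
  · refine (Finset.prod_eq_one fun p hp => ?_).symm
    have := (Finset.mem_sdiff.1 hp).2
    rw [if_neg fun h' => this (h h')]
  · obtain ⟨p, hp, hpT⟩ := Finset.not_subset.1 h
    exact (Finset.prod_eq_zero (Finset.mem_sdiff.2 ⟨hU hp, hpT⟩) (by simp [hp])).symm

lemma ek_choose {β : Type*} [DecidableEq β] (P : Finset β) (T : Finset β) (hT : T ⊆ P) (u : ℕ) :
    ((T.card.choose u : ℕ) : ℝ) = ∑ U ∈ P.powersetCard u, (if U ⊆ T then (1 : ℝ) else 0) := by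
  rw [← Finset.card_powersetCard, Finset.sum_boole]
  congr 2
  ext U
  simp only [Finset.mem_powersetCard, Finset.mem_filter]
  exact ⟨fun h => ⟨⟨h.1.trans hT, h.2⟩, h.1⟩, fun h => ⟨h.2, h.1.2⟩⟩

lemma ekW_choose {β : Type*} [DecidableEq β] (P : Finset β) (lam : β → ℝ) (u : ℕ) :
    ∑ T ∈ P.powerset, ekW P lam T * (T.card.choose u : ℝ) =
      ∑ U ∈ P.powersetCard u, ∏ p ∈ U, lam p := by
  have : ∀ T ∈ P.powerset, ekW P lam T * (T.card.choose u : ℝ) =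
      ∑ U ∈ P.powersetCard u, ekW P lam T * (if U ⊆ T then (1 : ℝ) else 0) := by
    intro T hT
    rw [ek_choose P T (Finset.mem_powerset.1 hT), Finset.mul_sum]
  rw [Finset.sum_congr rfl this, Finset.sum_comm]
  exact Finset.sum_congr rfl fun U hU => ekW_super P lam U (Finset.mem_powersetCard.1 hU).1

/-- Powers as combinations of binomials. -/
lemma ek_pow_choose (j : ℕ) : ∃ c : ℕ → ℝ, ∀ n : ℕ,
    (n : ℝ) ^ j = ∑ u ∈ Finset.range (j + 1), c u * (n.choose u : ℝ) := by
  induction j with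
  | zero => exact ⟨fun _ => 1, by simp⟩
  | succ j ih =>
    obtain ⟨c, hc⟩ := ih
    refine ⟨fun u => (if u < j + 1 then c u * u else 0) + (if u = 0 then 0 else c (u - 1) * u),
      fun n => ?_⟩
    have key : ∀ u : ℕ, (n : ℝ) * (n.choose u : ℝ) =
        u * (n.choose u : ℝ) + (u + 1) * (n.choose (u + 1) : ℝ) := by
      intro u
      rcases le_or_gt u n with h | h
      · have := Nat.choose_succ_right_eq n u
        have h2 : ((n.choose (u + 1) : ℕ) : ℝ) * (u + 1) = n.choose u * ((n : ℝ) - u) := by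
          rw [← Nat.cast_sub h]; exact_mod_cast this
        linarith
      · simp [Nat.choose_eq_zero_of_lt h, Nat.choose_eq_zero_of_lt (h.trans (Nat.lt_succ_self u))]
    rw [pow_succ, hc n, Finset.sum_mul]
    simp only [add_mul, Finset.sum_add_distrib]
    rw [Finset.sum_range_succ (fun u => (if u < j + 1 then c u * u else 0) * (n.choose u : ℝ)),
      Finset.sum_range_succ' (fun u => (if u = 0 then 0 else c (u - 1) * (u : ℝ)) * (n.choose u : ℝ))]
    simp only [lt_irrefl, if_false, zero_mul, add_zero, if_true]
    rw [← Finset.sum_add_distrib]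
    refine Finset.sum_congr rfl fun u hu => ?_
    rw [if_pos (Finset.mem_range.1 hu), if_neg (Nat.succ_ne_zero u), mul_assoc, mul_comm _ (n : ℝ),
      key u]
    simp only [Nat.add_sub_cancel]
    push_cast
    ring

/-- Key limit. -/
lemma ek_key_limit {ι : Type*} (l : Filter ι) (L μ : ι → ℝ) (hL : Tendsto L l atTop)
    (hμ : Tendsto (fun x => (μ x - L x) / Real.sqrt (L x)) l (𝓝 0)) (c : ℂ) :
    Tendsto (fun x => (μ x : ℂ) * (Complex.exp (c / (Real.sqrt (L x) : ℝ)) - 1) -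
      c * (Real.sqrt (L x) : ℝ)) l (𝓝 (c ^ 2 / 2)) := by
  have hs : Tendsto (fun x => Real.sqrt (L x)) l atTop := Real.tendsto_sqrt_atTop.comp hL
  have hinv : Tendsto (fun x => (((Real.sqrt (L x))⁻¹ : ℝ) : ℂ)) l (𝓝 0) := by
    have := (Complex.continuous_ofReal.tendsto 0).comp (tendsto_inv_atTop_zero.comp hs)
    simpa [Function.comp_def] using this
  have hh : Tendsto (fun x => c / (Real.sqrt (L x) : ℝ)) l (𝓝 0) := by
    have := hinv.const_mul c
    simpa [div_eq_mul_inv] using this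
  -- ratio
  have hμL : Tendsto (fun x => μ x / L x) l (𝓝 1) := by
    have h1 := (hμ.mul (tendsto_inv_atTop_zero.comp hs)).add_const 1
    simp only [mul_zero, zero_add] at h1
    refine h1.congr' ?_
    filter_upwards [hL.eventually_gt_atTop 0] with x hx
    simp only [Function.comp]
    have hsx : 0 < Real.sqrt (L x) := Real.sqrt_pos.2 hx
    have : Real.sqrt (L x) ^ 2 = L x := Real.sq_sqrt hx.le
    generalize Real.sqrt (L x) = s at *
    rw [← this]
    field_simp
    ring
  have hμL' : Tendsto (fun x => c ^ 2 * ((μ x / L x : ℝ) : ℂ)) l (𝓝 (c ^ 2)) := by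
    have := ((Complex.continuous_ofReal.tendsto 1).comp hμL).const_mul (c ^ 2)
    simpa [Function.comp_def] using this
  have hμ' : Tendsto (fun x => c * (((μ x - L x) / Real.sqrt (L x) : ℝ) : ℂ)) l (𝓝 0) := by
    have := ((Complex.continuous_ofReal.tendsto 0).comp hμ).const_mul c
    simpa [Function.comp_def] using this
  have hmul : ∀ᶠ x in l, (μ x : ℂ) * (c / (Real.sqrt (L x) : ℝ)) ^ 2 =
      c ^ 2 * ((μ x / L x : ℝ) : ℂ) := by
    filter_upwards [hL.eventually_gt_atTop 0] with x hx
    rw [div_pow, ← Complex.ofReal_pow, Real.sq_sqrt hx.le]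
    push_cast
    ring
  have hrem := (Complex.exp_sub_sum_range_succ_isLittleO_pow 2).comp_tendsto hh
  have hrem2 : Tendsto (fun x => (μ x : ℂ) * (Complex.exp (c / (Real.sqrt (L x) : ℝ)) -
      ∑ i ∈ Finset.range 3, (c / (Real.sqrt (L x) : ℝ)) ^ i / (i.factorial : ℂ))) l (𝓝 0) := by
    have h1 : (fun x => (μ x : ℂ) * (Complex.exp (c / (Real.sqrt (L x) : ℝ)) -
      ∑ i ∈ Finset.range 3, (c / (Real.sqrt (L x) : ℝ)) ^ i / (i.factorial : ℂ))) =o[l]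
      fun x => (μ x : ℂ) * (c / (Real.sqrt (L x) : ℝ)) ^ 2 :=
      (Asymptotics.isBigO_refl (fun x => (μ x : ℂ)) l).mul_isLittleO hrem
    have h2 := h1.trans_eventuallyEq hmul
    have h3 := h2.trans_isBigO (hμL'.isBigO_one ℝ)
    exact (Asymptotics.isLittleO_one_iff ℝ).1 h3
  have hfin := (hrem2.add (hμL'.div_const 2)).add hμ'
  simp only [zero_add, add_zero] at hfin
  refine hfin.congr' ?_
  filter_upwards [hL.eventually_gt_atTop 0, hmul] with x hx hmx
  rw [← hmx]
  have hsx : 0 < Real.sqrt (L x) := Real.sqrt_pos.2 hx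
  have hsx' : ((Real.sqrt (L x) : ℝ) : ℂ) ≠ 0 := by exact_mod_cast hsx.ne'
  have hLx : ((L x : ℝ) : ℂ) = ((Real.sqrt (L x) : ℝ) : ℂ) ^ 2 := by
    rw [← Complex.ofReal_pow, Real.sq_sqrt hx.le]
  push_cast
  rw [hLx]
  generalize ((Real.sqrt (L x) : ℝ) : ℂ) = s at *
  simp only [Finset.sum_range_succ, Finset.sum_range_zero, Nat.factorial]
  push_cast
  field_simp
  ring

lemma ek_prod_sub {β : Type*} (P : Finset β) (a b : β → ℂ) (ha : ∀ p ∈ P, ‖a p‖ ≤ 1)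
    (hb : ∀ p ∈ P, ‖b p‖ ≤ 1) : ‖∏ p ∈ P, a p - ∏ p ∈ P, b p‖ ≤ ∑ p ∈ P, ‖a p - b p‖ := by
  classical
  induction P using Finset.induction_on with
  | empty => simp
  | insert q P hq ih =>
    rw [Finset.prod_insert hq, Finset.prod_insert hq, Finset.sum_insert hq]
    have ih' := ih (fun p hp => ha p (Finset.mem_insert_of_mem hp))
      (fun p hp => hb p (Finset.mem_insert_of_mem hp))
    have h1 : ‖∏ p ∈ P, b p‖ ≤ 1 := by
      rw [norm_prod]
      exact Finset.prod_le_one (fun _ _ => norm_nonneg _)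
        (fun p hp => hb p (Finset.mem_insert_of_mem hp))
    have h2 := ha q (Finset.mem_insert_self q P)
    have e : a q * ∏ p ∈ P, a p - b q * ∏ p ∈ P, b p =
        (a q - b q) * ∏ p ∈ P, b p + a q * (∏ p ∈ P, a p - ∏ p ∈ P, b p) := by ring
    rw [e]
    refine (norm_add_le _ _).trans ?_
    rw [norm_mul, norm_mul]
    gcongr
    · exact mul_le_of_le_one_right (norm_nonneg _) h1
    · exact (mul_le_of_le_one_left (norm_nonneg _) h2).trans ih'

/-- characteristic function of the model. -/
lemma ek_model_cf {ι β : Type*} [DecidableEq β] (l : Filter ι) (L : ι → ℝ) (P : ι → Finset β)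
    (lam : β → ℝ) (hlam : ∀ᶠ x in l, ∀ p ∈ P x, 0 ≤ lam p ∧ lam p ≤ 1)
    (hL : Tendsto L l atTop)
    (hμ : Tendsto (fun x => (∑ p ∈ P x, lam p - L x) / Real.sqrt (L x)) l (𝓝 0))
    (hsq : Tendsto (fun x => (∑ p ∈ P x, lam p ^ 2) / L x) l (𝓝 0)) (t : ℝ) :
    Tendsto (fun x => ∑ T ∈ (P x).powerset, (ekW (P x) lam T : ℂ) *
      Complex.exp ((t * ((T.card - L x) / Real.sqrt (L x)) : ℝ) * Complex.I)) l
      (𝓝 (Complex.exp (-(t ^ 2 / 2 : ℝ)))) := by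
  set z : ι → ℂ := fun x => Complex.exp ((t / Real.sqrt (L x) : ℝ) * Complex.I) with hz
  have hform : ∀ x, L x > 0 → ∑ T ∈ (P x).powerset, (ekW (P x) lam T : ℂ) *
      Complex.exp ((t * ((T.card - L x) / Real.sqrt (L x)) : ℝ) * Complex.I) =
      (∏ p ∈ P x, (1 + lam p * (z x - 1))) *
        Complex.exp ((-(t * Real.sqrt (L x)) : ℝ) * Complex.I) := by
    intro x hx
    rw [← ekW_gen, Finset.sum_mul]
    refine Finset.sum_congr rfl fun T _ => ?_
    rw [mul_assoc, hz, ← Complex.exp_nat_mul, ← Complex.exp_add]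
    congr 2
    have hsx : 0 < Real.sqrt (L x) := Real.sqrt_pos.2 hx
    have hsx' : ((Real.sqrt (L x) : ℝ) : ℂ) ≠ 0 := by exact_mod_cast hsx.ne'
    have hLx : ((L x : ℝ) : ℂ) = ((Real.sqrt (L x) : ℝ) : ℂ) ^ 2 := by
      rw [← Complex.ofReal_pow, Real.sq_sqrt hx.le]
    push_cast
    rw [hLx]
    generalize ((Real.sqrt (L x) : ℝ) : ℂ) = s at *
    field_simp
    ring
  have hmain := (Complex.continuous_exp.tendsto _).comp
    (ek_key_limit l L (fun x => ∑ p ∈ P x, lam p) hL hμ (t * Complex.I))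
  have hval : (t * Complex.I : ℂ) ^ 2 / 2 = -(t ^ 2 / 2 : ℝ) := by
    rw [mul_pow, Complex.I_sq]; push_cast; ring
  rw [hval] at hmain
  have hdiff : Tendsto (fun x => (∏ p ∈ P x, (1 + lam p * (z x - 1)) -
      ∏ p ∈ P x, Complex.exp (lam p * (z x - 1))) *
        Complex.exp ((-(t * Real.sqrt (L x)) : ℝ) * Complex.I)) l (𝓝 0) := by
    have hb : Tendsto (fun x => t ^ 2 * ((∑ p ∈ P x, lam p ^ 2) / L x)) l (𝓝 0) := by
      simpa using hsq.const_mul (t ^ 2)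
    have hsmall : ∀ᶠ x in l, |t| / Real.sqrt (L x) ≤ 1 := by
      have hs : Tendsto (fun x => Real.sqrt (L x)) l atTop := Real.tendsto_sqrt_atTop.comp hL
      filter_upwards [hs.eventually_ge_atTop (|t| + 1)] with x hx
      have := abs_nonneg t
      rw [div_le_one (by linarith)]
      linarith
    refine squeeze_zero_norm' ?_ hb
    filter_upwards [hlam, hL.eventually_gt_atTop 0, hsmall] with x hlx hx hsm
    rw [norm_mul, Complex.norm_exp_ofReal_mul_I, mul_one]
    have hz1 : ‖z x‖ = 1 := by rw [hz]; exact Complex.norm_exp_ofReal_mul_I _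
    have hzs : ‖z x - 1‖ ≤ |t| / Real.sqrt (L x) := by
      have := @Real.norm_exp_I_mul_ofReal_sub_one_le (t / Real.sqrt (L x))
      rw [Real.norm_eq_abs, abs_div, abs_of_nonneg (Real.sqrt_nonneg _)] at this
      rw [hz]
      rwa [mul_comm Complex.I] at this
    have hre : (z x - 1).re ≤ 0 := by
      have := Complex.re_le_norm (z x)
      rw [hz1] at this
      simp; linarith
    refine (ek_prod_sub _ _ _ ?_ ?_).trans ?_
    · intro p hp
      obtain ⟨h0, h1⟩ := hlx p hp
      have : (1 + (lam p : ℂ) * (z x - 1)) = ((1 - lam p : ℝ) : ℂ) + lam p * z x := by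
        push_cast; ring
      rw [this]
      refine (norm_add_le _ _).trans ?_
      rw [norm_mul, hz1, Complex.norm_real, Complex.norm_real, Real.norm_of_nonneg h0,
        Real.norm_of_nonneg (by linarith)]
      linarith
    · intro p hp
      obtain ⟨h0, h1⟩ := hlx p hp
      rw [Complex.norm_exp, Real.exp_le_one_iff, Complex.re_ofReal_mul]
      exact mul_nonpos_of_nonneg_of_nonpos h0 hre
    · have hLs : Real.sqrt (L x) ^ 2 = L x := Real.sq_sqrt hx.le
      have : t ^ 2 * ((∑ p ∈ P x, lam p ^ 2) / L x) =
          ∑ p ∈ P x, (lam p * (|t| / Real.sqrt (L x))) ^ 2 := by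
        simp only [mul_pow, div_pow, sq_abs, hLs]
        rw [← Finset.sum_mul]; ring
      rw [this]
      refine Finset.sum_le_sum fun p hp => ?_
      obtain ⟨h0, h1⟩ := hlx p hp
      have hn : ‖(lam p : ℂ) * (z x - 1)‖ ≤ lam p * (|t| / Real.sqrt (L x)) := by
        rw [norm_mul, Complex.norm_real, Real.norm_of_nonneg h0]
        gcongr
      have hn1 : ‖(lam p : ℂ) * (z x - 1)‖ ≤ 1 := hn.trans (by
        have : 0 ≤ |t| / Real.sqrt (L x) := by positivity
        nlinarith)
      rw [norm_sub_rev]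
      have := Complex.norm_exp_sub_one_sub_id_le hn1
      rw [show Complex.exp ((lam p : ℂ) * (z x - 1)) - (1 + (lam p : ℂ) * (z x - 1)) =
        Complex.exp ((lam p : ℂ) * (z x - 1)) - 1 - (lam p : ℂ) * (z x - 1) by ring]
      refine this.trans ?_
      gcongr
  have hfin := hdiff.add hmain
  rw [zero_add] at hfin
  refine hfin.congr' ?_
  filter_upwards [hL.eventually_gt_atTop 0] with x hx
  rw [hform x hx, sub_mul, sub_add]
  convert sub_zero _ using 2
  rw [sub_eq_zero, ← Complex.exp_sum, ← Complex.exp_add, Function.comp]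
  congr 1
  rw [← Finset.sum_mul, hz]
  push_cast
  ring_nf

/-- exponential moments of the model. -/
lemma ek_model_exp {ι β : Type*} [DecidableEq β] (l : Filter ι) (L : ι → ℝ) (P : ι → Finset β)
    (lam : β → ℝ) (hlam : ∀ᶠ x in l, ∀ p ∈ P x, 0 ≤ lam p ∧ lam p ≤ 1)
    (hL : Tendsto L l atTop)
    (hμ : Tendsto (fun x => (∑ p ∈ P x, lam p - L x) / Real.sqrt (L x)) l (𝓝 0)) (t : ℝ) :
    ∃ C : ℝ, ∀ᶠ x in l, ∑ T ∈ (P x).powerset, ekW (P x) lam T *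
      Real.exp (t * ((T.card - L x) / Real.sqrt (L x))) ≤ C := by
  have hmain : Tendsto (fun x => Real.exp ((∑ p ∈ P x, lam p) *
      (Real.exp (t / Real.sqrt (L x)) - 1) - t * Real.sqrt (L x))) l
      (𝓝 (Real.exp (t ^ 2 / 2))) := by
    refine (Real.continuous_exp.tendsto _).comp ?_
    have := (Complex.continuous_re.tendsto _).comp
      (ek_key_limit l L (fun x => ∑ p ∈ P x, lam p) hL hμ t)
    convert! this using 2
    · simp only [Function.comp]
      norm_cast
    · norm_cast
  refine ⟨Real.exp (t ^ 2 / 2) + 1, ?_⟩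
  filter_upwards [hlam, hL.eventually_gt_atTop 0, hmain.eventually (gt_mem_nhds (lt_add_one _))]
    with x hlx hx hb
  refine le_trans ?_ hb.le
  set z := Real.exp (t / Real.sqrt (L x)) with hz
  have hz0 : 0 < z := Real.exp_pos _
  have hsx : 0 < Real.sqrt (L x) := Real.sqrt_pos.2 hx
  have hLs : L x = Real.sqrt (L x) ^ 2 := (Real.sq_sqrt hx.le).symm
  have e : ∑ T ∈ (P x).powerset, ekW (P x) lam T *
      Real.exp (t * ((T.card - L x) / Real.sqrt (L x))) =
      (∏ p ∈ P x, (1 + lam p * (z - 1))) * Real.exp (-(t * Real.sqrt (L x))) := by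
    rw [← ekW_gen_real, Finset.sum_mul]
    refine Finset.sum_congr rfl fun T _ => ?_
    rw [mul_assoc, hz, ← Real.exp_nat_mul, ← Real.exp_add]
    congr 2
    conv_lhs => rw [hLs]
    rw [Real.sqrt_sq hsx.le]
    field_simp
    ring
  rw [e, sub_eq_add_neg _ (t * Real.sqrt (L x)), Real.exp_add, Finset.sum_mul, Real.exp_sum]
  gcongr with p hp
  · intro p hp
    obtain ⟨h0, h1⟩ := hlx p hp
    nlinarith
  · rw [add_comm]; exact Real.add_one_le_exp _

lemma ek_gaussPhi (γ : ℝ) :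
    (ProbabilityTheory.gaussianReal 0 1).real (Set.Iic γ) = gaussPhi γ := by
  rw [Measure.real, ProbabilityTheory.gaussianReal_apply_eq_integral 0 one_ne_zero,
    ENNReal.toReal_ofReal]
  · rw [gaussPhi, ← integral_const_mul]
    simp [ProbabilityTheory.gaussianPDFReal]
  · exact integral_nonneg fun x => ProbabilityTheory.gaussianPDFReal_nonneg _ _ _

lemma ek_gaussPhi_continuous : Continuous gaussPhi := by
  have h : Integrable (fun u : ℝ => Real.exp (-u ^ 2 / 2)) := by
    have := integrable_exp_neg_mul_sq (b := 1 / 2) (by norm_num)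
    refine this.congr (Eventually.of_forall fun u => ?_)
    simp only; congr 1; ring
  refine continuous_const.mul ?_
  have e : (fun γ : ℝ => ∫ u in Set.Iic γ, Real.exp (-u ^ 2 / 2)) =
      fun γ => (∫ u in Set.Iic 0, Real.exp (-u ^ 2 / 2)) + ∫ u in (0 : ℝ)..γ, Real.exp (-u ^ 2 / 2) := by
    funext γ
    rw [← intervalIntegral.integral_Iic_sub_Iic h.integrableOn h.integrableOn]
    ring
  rw [e]
  exact continuous_const.add (intervalIntegral.continuous_primitive
    (fun a b => h.intervalIntegrable) 0)

/-- Convergence of distribution functions from characteristic functions, along a sequence. -/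
lemma ek_cdf_seq {α : Type*} (A : ℕ → Finset α) (X : ℕ → α → ℝ)
    (hA : ∀ n, (A n).Nonempty)
    (hcf : ∀ t : ℝ, Tendsto (fun n => ∑ a ∈ A n, (((A n).card : ℝ)⁻¹ : ℝ) *
      Complex.exp ((t * X n a : ℝ) * Complex.I)) atTop (𝓝 (Complex.exp (-(t ^ 2 / 2 : ℝ)))))
    (γ : ℝ) :
    Tendsto (fun n => (((A n).filter fun a => X n a ≤ γ).card : ℝ) / (A n).card) atTop
      (𝓝 (gaussPhi γ)) := by
  let m : ℕ → Measure ℝ := fun n => ∑ a ∈ A n, (ENNReal.ofReal ((A n).card : ℝ)⁻¹) •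
    Measure.dirac (X n a)
  have hc : ∀ n, (0 : ℝ) < (A n).card := fun n => by exact_mod_cast (hA n).card_pos
  have hp : ∀ n, IsProbabilityMeasure (m n) := by
    intro n
    constructor
    simp only [m, Measure.coe_finsetSum, Finset.sum_apply, Measure.smul_apply, measure_univ,
      smul_eq_mul, mul_one, Finset.sum_const, nsmul_eq_mul]
    rw [ENNReal.ofReal_inv_of_pos (hc n), ENNReal.ofReal_natCast]
    exact ENNReal.mul_inv_cancel (by exact_mod_cast (hA n).card_pos.ne') (by simp)
  let μ : ℕ → ProbabilityMeasure ℝ := fun n => ⟨m n, hp n⟩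
  let g : ProbabilityMeasure ℝ := ⟨ProbabilityTheory.gaussianReal 0 1, inferInstance⟩
  have hlim : Tendsto μ atTop (𝓝 g) := by
    refine ProbabilityMeasure.tendsto_iff_tendsto_charFun.2 fun t => ?_
    have e1 : charFun (g : Measure ℝ) t = Complex.exp (-(t ^ 2 / 2 : ℝ)) := by
      change charFun (ProbabilityTheory.gaussianReal 0 1) t = _
      rw [ProbabilityTheory.charFun_gaussianReal]
      congr 1
      push_cast
      simp
    rw [e1]
    refine (hcf t).congr fun n => ?_
    change _ = charFun (m n) t
    rw [charFun_apply_real, integral_finsetSum_measure]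
    · refine Finset.sum_congr rfl fun a _ => ?_
      rw [integral_smul_measure, integral_dirac, ENNReal.toReal_ofReal (inv_nonneg.2 (hc n).le)]
      push_cast
      simp
    · intro a _
      exact (integrable_dirac (by simp)).smul_measure ENNReal.ofReal_ne_top
  have hnull : g (frontier (Set.Iic γ)) = 0 := by
    rw [frontier_Iic]
    have : (ProbabilityTheory.gaussianReal 0 1) {γ} = 0 := by
      have := ProbabilityTheory.nullSingletonClass_gaussianReal (μ := 0) (v := 1) one_ne_zero
      simp
    have h2 : (g : Measure ℝ) {γ} = 0 := this
    exact (ProbabilityMeasure.null_iff_toMeasure_null g _).2 h2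
  have hconv := ProbabilityMeasure.tendsto_measure_of_null_frontier_of_tendsto hlim hnull
  have hconv2 := (NNReal.continuous_coe.tendsto _).comp hconv
  have e2 : ((g (Set.Iic γ) : NNReal) : ℝ) = gaussPhi γ := by
    rw [← ek_gaussPhi]; rfl
  rw [e2] at hconv2
  refine hconv2.congr fun n => ?_
  change ((m n) (Set.Iic γ)).toReal = _
  simp only [m, Measure.coe_finsetSum, Finset.sum_apply, Measure.smul_apply, smul_eq_mul]
  rw [← Finset.mul_sum, ENNReal.toReal_mul, ENNReal.toReal_ofReal (inv_nonneg.2 (hc n).le),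
    div_eq_inv_mul]
  congr 1
  simp only [Measure.dirac_apply' _ measurableSet_Iic, Set.indicator_apply, Set.mem_Iic,
    Pi.one_apply]
  rw [Finset.sum_boole]
  simp

lemma ek_cdf {α : Type*} (A : ℝ → Finset α) (X : ℝ → α → ℝ)
    (hA : ∀ᶠ x in atTop, (A x).Nonempty)
    (hcf : ∀ t : ℝ, Tendsto (fun x => ∑ a ∈ A x, (((A x).card : ℝ)⁻¹ : ℝ) *
      Complex.exp ((t * X x a : ℝ) * Complex.I)) atTop (𝓝 (Complex.exp (-(t ^ 2 / 2 : ℝ)))))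
    (γ : ℝ) :
    Tendsto (fun x => (((A x).filter fun a => X x a ≤ γ).card : ℝ) / (A x).card) atTop
      (𝓝 (gaussPhi γ)) := by
  refine tendsto_of_seq_tendsto fun v hv => ?_
  obtain ⟨N, hN⟩ := eventually_atTop.1 (hv.eventually hA)
  have hv' : Tendsto (fun n => v (n + N)) atTop atTop := hv.comp (tendsto_add_atTop_nat N)
  have := ek_cdf_seq (fun n => A (v (n + N))) (fun n => X (v (n + N)))
    (fun n => hN _ (Nat.le_add_left _ _)) (fun t => (hcf t).comp hv') γ
  exact (tendsto_add_atTop_iff_nat (f := fun n => (((A (v n)).filter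
    fun a => X (v n) a ≤ γ).card : ℝ) / (A (v n)).card) N).1 this

/-- Moment matching. -/
lemma ek_moments {ι : Type*} {α β : Type} (l : Filter ι) (L : ι → ℝ)
    (s : ι → Finset α) (w : ι → α → ℝ) (f : ι → α → ℕ)
    (s' : ι → Finset β) (w' : ι → β → ℝ) (f' : ι → β → ℕ)
    (hL : Tendsto L l atTop)
    (hch : ∀ u N : ℕ, Tendsto (fun x => L x ^ N * |∑ a ∈ s x, w x a * ((f x a).choose u : ℝ) -
      ∑ b ∈ s' x, w' x b * ((f' x b).choose u : ℝ)|) l (𝓝 0)) (k : ℕ) :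
    Tendsto (fun x => ∑ a ∈ s x, w x a * ((f x a - L x) / Real.sqrt (L x)) ^ k -
      ∑ b ∈ s' x, w' x b * ((f' x b - L x) / Real.sqrt (L x)) ^ k) l (𝓝 0) := by
  have hpow : ∀ j N : ℕ, Tendsto (fun x => L x ^ N * |∑ a ∈ s x, w x a * (f x a : ℝ) ^ j -
      ∑ b ∈ s' x, w' x b * (f' x b : ℝ) ^ j|) l (𝓝 0) := by
    intro j N
    obtain ⟨c, hc⟩ := ek_pow_choose j
    have hb : Tendsto (fun x => ∑ u ∈ Finset.range (j + 1), |c u| * (L x ^ N *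
        |∑ a ∈ s x, w x a * ((f x a).choose u : ℝ) -
        ∑ b ∈ s' x, w' x b * ((f' x b).choose u : ℝ)|)) l (𝓝 0) := by
      rw [show (0 : ℝ) = ∑ u ∈ Finset.range (j + 1), |c u| * 0 by simp]
      exact tendsto_finsetSum _ fun u _ => (hch u N).const_mul _
    refine squeeze_zero' ?_ ?_ hb
    · filter_upwards [hL.eventually_ge_atTop 0] with x hx
      positivity
    · filter_upwards [hL.eventually_ge_atTop 0] with x hx
      have e : ∑ a ∈ s x, w x a * (f x a : ℝ) ^ j - ∑ b ∈ s' x, w' x b * (f' x b : ℝ) ^ j =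
          ∑ u ∈ Finset.range (j + 1), c u * (∑ a ∈ s x, w x a * ((f x a).choose u : ℝ) -
            ∑ b ∈ s' x, w' x b * ((f' x b).choose u : ℝ)) := by
        simp only [hc, mul_sub, Finset.mul_sum, Finset.sum_sub_distrib]
        congr 1
        · rw [Finset.sum_comm]
          exact Finset.sum_congr rfl fun u _ => Finset.sum_congr rfl fun a _ => by ring
        · rw [Finset.sum_comm]
          exact Finset.sum_congr rfl fun u _ => Finset.sum_congr rfl fun a _ => by ring
      rw [e]
      calc _ ≤ L x ^ N * ∑ u ∈ Finset.range (j + 1), |c u * (∑ a ∈ s x, w x a * ((f x a).choose u : ℝ) -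
            ∑ b ∈ s' x, w' x b * ((f' x b).choose u : ℝ))| := by
            gcongr
            exact Finset.abs_sum_le_sum_abs _ _
        _ = _ := by
            rw [Finset.mul_sum]
            exact Finset.sum_congr rfl fun u _ => by rw [abs_mul]; ring
  have hb : Tendsto (fun x => ∑ j ∈ Finset.range (k + 1), (k.choose j : ℝ) * (L x ^ k *
      |∑ a ∈ s x, w x a * (f x a : ℝ) ^ j - ∑ b ∈ s' x, w' x b * (f' x b : ℝ) ^ j|)) l (𝓝 0) := by
    rw [show (0 : ℝ) = ∑ j ∈ Finset.range (k + 1), (k.choose j : ℝ) * 0 by simp]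
    exact tendsto_finsetSum _ fun j _ => (hpow j k).const_mul _
  refine squeeze_zero_norm' ?_ hb
  filter_upwards [hL.eventually_ge_atTop 1] with x hx
  have hs1 : 1 ≤ Real.sqrt (L x) := Real.one_le_sqrt.2 hx
  have e : ∑ a ∈ s x, w x a * ((f x a - L x) / Real.sqrt (L x)) ^ k -
      ∑ b ∈ s' x, w' x b * ((f' x b - L x) / Real.sqrt (L x)) ^ k =
      (∑ j ∈ Finset.range (k + 1), (k.choose j : ℝ) * ((-L x) ^ (k - j) *
      (∑ a ∈ s x, w x a * (f x a : ℝ) ^ j - ∑ b ∈ s' x, w' x b * (f' x b : ℝ) ^ j)))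
        / Real.sqrt (L x) ^ k := by
    have hbin : ∀ n : ℝ, ((n - L x) / Real.sqrt (L x)) ^ k =
        (∑ j ∈ Finset.range (k + 1), (k.choose j : ℝ) * (-L x) ^ (k - j) * n ^ j) /
          Real.sqrt (L x) ^ k := by
      intro n
      rw [div_pow, sub_eq_add_neg, add_pow]
      congr 1
      exact Finset.sum_congr rfl fun j _ => by ring
    have hsum : ∀ {δ : Type} (s : Finset δ) (w n : δ → ℝ),
        ∑ a ∈ s, w a * ((∑ j ∈ Finset.range (k + 1), (k.choose j : ℝ) * (-L x) ^ (k - j) *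
          (n a) ^ j) / Real.sqrt (L x) ^ k) =
        (∑ j ∈ Finset.range (k + 1), (k.choose j : ℝ) * ((-L x) ^ (k - j) *
          ∑ a ∈ s, w a * (n a) ^ j)) / Real.sqrt (L x) ^ k := by
      intro δ s w n
      simp only [Finset.mul_sum, Finset.sum_div]
      rw [Finset.sum_comm]
      exact Finset.sum_congr rfl fun u _ => Finset.sum_congr rfl fun a _ => by ring
    simp only [hbin]
    rw [hsum, hsum, ← sub_div, ← Finset.sum_sub_distrib]
    congr 1
    exact Finset.sum_congr rfl fun j _ => by ring
  rw [e, Real.norm_eq_abs, abs_div, abs_of_nonneg (a := Real.sqrt (L x) ^ k) (by positivity)]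
  refine (div_le_self (abs_nonneg _) (one_le_pow₀ hs1)).trans ?_
  refine (Finset.abs_sum_le_sum_abs _ _).trans (Finset.sum_le_sum fun j _ => ?_)
  rw [abs_mul, abs_mul, abs_pow, abs_neg, abs_of_nonneg (a := L x) (by linarith), Nat.abs_cast]
  gcongr
  exact Nat.sub_le _ _

/-- The abstract Erdős–Kac theorem. -/
lemma ek_core {α β : Type} [DecidableEq β] (L : ℝ → ℝ) (A : ℝ → Finset α) (P : ℝ → Finset β)
    (dv : β → α → Prop) [∀ p m, Decidable (dv p m)] (lam : β → ℝ)
    (hlam : ∀ᶠ x in atTop, ∀ p ∈ P x, 0 ≤ lam p ∧ lam p ≤ 1)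
    (hA : ∀ᶠ x in atTop, (A x).Nonempty)
    (hL : Tendsto L atTop atTop)
    (hμ : Tendsto (fun x => (∑ p ∈ P x, lam p - L x) / Real.sqrt (L x)) atTop (𝓝 0))
    (hsq : Tendsto (fun x => (∑ p ∈ P x, lam p ^ 2) / L x) atTop (𝓝 0))
    (herr : ∀ u N : ℕ, 1 ≤ u → Tendsto (fun x => L x ^ N * ∑ U ∈ (P x).powersetCard u,
      |(((A x).filter fun m => ∀ p ∈ U, dv p m).card : ℝ) / (A x).card - ∏ p ∈ U, lam p|)
        atTop (𝓝 0))
    (γ : ℝ) :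
    Tendsto (fun x => (((A x).filter fun m =>
      (((P x).filter fun p => dv p m).card - L x) / Real.sqrt (L x) ≤ γ).card : ℝ) / (A x).card)
      atTop (𝓝 (gaussPhi γ)) := by
  refine ek_cdf A (fun x m => (((P x).filter fun p => dv p m).card - L x) / Real.sqrt (L x)) hA
    (fun t => ?_) γ
  have hchoose : ∀ u x, ∑ m ∈ A x, ((A x).card : ℝ)⁻¹ *
      ((((P x).filter fun p => dv p m).card.choose u : ℕ) : ℝ) =
      ∑ U ∈ (P x).powersetCard u,
        (((A x).filter fun m => ∀ p ∈ U, dv p m).card : ℝ) / (A x).card := by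
    intro u x
    have : ∀ m ∈ A x, ((A x).card : ℝ)⁻¹ *
      ((((P x).filter fun p => dv p m).card.choose u : ℕ) : ℝ) = ∑ U ∈ (P x).powersetCard u,
        ((A x).card : ℝ)⁻¹ * (if ∀ p ∈ U, dv p m then 1 else 0) := by
      intro m _
      rw [ek_choose (P x) _ (Finset.filter_subset _ _), Finset.mul_sum]
      refine Finset.sum_congr rfl fun U hU => ?_
      congr 2
      have hU' := (Finset.mem_powersetCard.1 hU).1
      apply propext
      constructor
      · intro h p hp
        exact (Finset.mem_filter.1 (h hp)).2
      · intro h p hp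
        exact Finset.mem_filter.2 ⟨hU' hp, h p hp⟩
    rw [Finset.sum_congr rfl this, Finset.sum_comm]
    refine Finset.sum_congr rfl fun U _ => ?_
    rw [← Finset.mul_sum, Finset.sum_boole, div_eq_inv_mul]
  have hmom := ek_moments atTop L A (fun x _ => ((A x).card : ℝ)⁻¹)
    (fun x m => ((P x).filter fun p => dv p m).card) (fun x => (P x).powerset)
    (fun x => ekW (P x) lam) (fun x T => T.card) hL (by
      intro u N
      simp only [hchoose, ekW_choose]
      rcases Nat.eq_zero_or_pos u with rfl | hu
      · refine tendsto_const_nhds.congr' ?_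
        filter_upwards [hA] with x hx
        have : ((A x).card : ℝ) ≠ 0 := by exact_mod_cast hx.card_pos.ne'
        simp [this]
      · refine squeeze_zero' ?_ ?_ (herr u N hu)
        · filter_upwards [hL.eventually_ge_atTop 0] with x hx
          positivity
        · filter_upwards [hL.eventually_ge_atTop 0] with x hx
          rw [← Finset.sum_sub_distrib]
          gcongr
          exact Finset.abs_sum_le_sum_abs _ _)
  have hcmp := ek_cf_compare atTop A (fun x _ => ((A x).card : ℝ)⁻¹)
    (fun x m => (((P x).filter fun p => dv p m).card - L x) / Real.sqrt (L x))
    (fun x => (P x).powerset) (fun x => ekW (P x) lam)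
    (fun x T => (T.card - L x) / Real.sqrt (L x))
    (Eventually.of_forall fun x a _ => by positivity)
    (hlam.mono fun x hx T hT => ekW_nonneg _ _ hx T hT) hmom
    (fun t => ek_model_exp atTop L P lam hlam hL hμ t) t
  have := hcmp.add (ek_model_cf atTop L P lam hlam hL hμ hsq t)
  simpa using this

lemma ek_tsum {α : Type*} {p : α → Prop} (s : Finset α) (H : ∀ x, x ∈ s ↔ p x) (f : α → ℝ) :
    ∑' a : {x // p x}, f a.1 = ∑ a ∈ s, f a := by
  have : p = (· ∈ s) := by funext x; exact propext (H x).symm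
  subst this
  exact Finset.tsum_subtype s f

lemma ek_limit_sandwich (F : ℝ → ℝ → ℝ) (G : ℝ → ℝ)
    (hF : ∀ γ, Tendsto (F γ) atTop (𝓝 (gaussPhi γ))) (γ : ℝ)
    (h : ∀ δ > 0, ∃ b : ℝ → ℝ, Tendsto b atTop (𝓝 0) ∧
      ∀ᶠ x in atTop, F (γ - δ) x - b x ≤ G x ∧ G x ≤ F (γ + δ) x + b x) :
    Tendsto G atTop (𝓝 (gaussPhi γ)) := by
  rw [Metric.tendsto_nhds]
  intro ε hε
  obtain ⟨η, hη, hc⟩ := Metric.continuous_iff.1 ek_gaussPhi_continuous γ (ε / 3) (by positivity)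
  obtain ⟨b, hb, hG⟩ := h (η / 2) (by positivity)
  have c1 := hc (γ - η / 2) (by rw [Real.dist_eq, abs_lt]; constructor <;> linarith)
  have c2 := hc (γ + η / 2) (by rw [Real.dist_eq, abs_lt]; constructor <;> linarith)
  have d1 := Metric.tendsto_nhds.1 (hF (γ - η / 2)) (ε / 3) (by positivity)
  have d2 := Metric.tendsto_nhds.1 (hF (γ + η / 2)) (ε / 3) (by positivity)
  have d3 := Metric.tendsto_nhds.1 hb (ε / 3) (by positivity)
  filter_upwards [d1, d2, d3, hG] with x e1 e2 e3 e4
  rw [Real.dist_eq, abs_lt] at *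
  constructor <;> linarith [e4.1, e4.2]

/-- The pointwise comparison. -/
lemma ek_pointwise (γ δ L l f g h C : ℝ) (hδ : 0 < δ) (hl1 : L - 1 ≤ l)
    (hl2 : l ≤ L) (hL : 2 ≤ L) (hg0 : 0 ≤ g) (hg : g ≤ δ / 4 * Real.sqrt L)
    (hh0 : 0 ≤ h) (hh : h ≤ C) (hC : C ≤ δ / 4 * Real.sqrt L)
    (hγ : |γ| + 1 ≤ δ / 2 * Real.sqrt L) :
    ((f + g + h - l) / Real.sqrt l ≤ γ → (f - L) / Real.sqrt L ≤ γ + δ) ∧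
    ((f - L) / Real.sqrt L ≤ γ - δ → (f + g + h - l) / Real.sqrt l ≤ γ) := by
  have hsL : 0 < Real.sqrt L := Real.sqrt_pos.2 (by linarith)
  have hsl : 0 < Real.sqrt l := Real.sqrt_pos.2 (by linarith)
  have h1 : 1 ≤ Real.sqrt L := Real.one_le_sqrt.2 (by linarith)
  have hle : Real.sqrt l ≤ Real.sqrt L := Real.sqrt_le_sqrt hl2
  have q1 : Real.sqrt L ^ 2 = L := Real.sq_sqrt (by linarith)
  have q2 : Real.sqrt l ^ 2 = l := Real.sq_sqrt (by linarith)
  have hd : Real.sqrt L - Real.sqrt l ≤ 1 := by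
    by_contra hcon
    push Not at hcon
    nlinarith
  have hγd : |γ * (Real.sqrt L - Real.sqrt l)| ≤ |γ| := by
    rw [abs_mul]
    refine mul_le_of_le_one_right (abs_nonneg _) ?_
    rw [abs_le]; constructor <;> linarith
  obtain ⟨k1, k2⟩ := abs_le.1 hγd
  have hpos : 0 < δ * Real.sqrt L := by positivity
  constructor
  · intro hc
    rw [div_le_iff₀ hsl] at hc
    rw [div_le_iff₀ hsL]
    nlinarith
  · intro hc
    rw [div_le_iff₀ hsL] at hc
    rw [div_le_iff₀ hsl]
    nlinarith

lemma ek_fin (K : Type) [Field K] [NumberField K] (x : ℝ) :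
    {I : Ideal (NumberField.RingOfIntegers K) | (Ideal.absNorm I : ℝ) ≤ x}.Finite := by
  refine (Ideal.finite_setOfPred_absNorm_le (S := NumberField.RingOfIntegers K) ⌊x⌋₊).subset ?_
  intro I hI
  exact Nat.le_floor hI

/-- Ideals of norm at most `x`. -/
def ekB (K : Type) [Field K] [NumberField K] (x : ℝ) :
    Finset (Ideal (NumberField.RingOfIntegers K)) := (ek_fin K x).toFinset

lemma ekB_mem (K : Type) [Field K] [NumberField K] (x : ℝ)
    (I : Ideal (NumberField.RingOfIntegers K)) : I ∈ ekB K x ↔ (Ideal.absNorm I : ℝ) ≤ x := by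
  simp [ekB]

lemma ek_norm_le (K : Type) [Field K] [NumberField K]
    (p m : Ideal (NumberField.RingOfIntegers K)) (hm : m ≠ 0) (h : p ∣ m) :
    (Ideal.absNorm p : ℝ) ≤ Ideal.absNorm m := by
  have h0 : Ideal.absNorm m ≠ 0 := by
    rw [Ne, Ideal.absNorm_eq_zero_iff]; exact hm
  exact_mod_cast Nat.le_of_dvd (Nat.pos_of_ne_zero h0) (map_dvd Ideal.absNorm h)

/-- **The Erdős–Kac theorem for subsets of the ideals of a number field.**
`S` is a set of nonzero ideals, infinite, with `|S(√x)| = o(|S(x)|)`; `λ_p` are real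
constants and, for a finite set `T` of distinct prime ideals, `e T x` is defined by the
density relation `|{m ∈ S(x) : p ∣ m ∀ p ∈ T}|/|S(x)| = ∏_{p ∈ T} λ_p + e T x`.
Under conditions (a)–(f), `(ω(m) - log log N(m))/√(log log N(m))` obeys the Gaussian
distribution on `S`. -/
theorem erdosKac_subset_numberField
    (S : Set (Ideal (NumberField.RingOfIntegers K)))
    (hS0 : 0 ∉ S) (hSinf : S.Infinite)
    (hShalf : (fun x : ℝ => (countS K S (x ^ ((1 : ℝ)/2)) : ℝ)) =o[atTop]
      fun x : ℝ => (countS K S x : ℝ))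
    (β : ℝ) (hβ0 : 0 < β) (hβ1 : β ≤ 1)
    (y : ℝ → ℝ) (hy : ∀ x : ℝ, 1 < x → 1 < y x ∧ y x < x ^ β)
    (lam : Ideal (NumberField.RingOfIntegers K) → ℝ)
    (e : Finset (Ideal (NumberField.RingOfIntegers K)) → ℝ → ℝ)
    (hdensity : ∀ T : Finset (Ideal (NumberField.RingOfIntegers K)),
      (∀ p ∈ T, p.IsPrime) → ∀ x : ℝ,
      (Nat.card {m : Ideal (NumberField.RingOfIntegers K) //
          m ∈ S ∧ (Ideal.absNorm m : ℝ) ≤ x ∧ ∀ p ∈ T, p ∣ m} : ℝ) /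
        (countS K S x : ℝ) = (∏ p ∈ T, lam p) + e T x)
    -- condition (a)
    (ha : ∃ C : ℝ, ∀ x : ℝ, 1 < x → ∀ m ∈ S, (Ideal.absNorm m : ℝ) ≤ x →
      (Nat.card {p : Ideal (NumberField.RingOfIntegers K) //
        p.IsPrime ∧ x ^ β < (Ideal.absNorm p : ℝ) ∧ p ∣ m} : ℝ) ≤ C)
    -- condition (b)
    (hb : (fun x : ℝ => ∑' p : {p : Ideal (NumberField.RingOfIntegers K) //
        p.IsPrime ∧ y x < (Ideal.absNorm p : ℝ) ∧ (Ideal.absNorm p : ℝ) ≤ x ^ β}, lam p.1)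
      =o[atTop] fun x : ℝ => Real.sqrt (Real.log (Real.log x)))
    -- condition (c)
    (hc : (fun x : ℝ => ∑' p : {p : Ideal (NumberField.RingOfIntegers K) //
        p.IsPrime ∧ y x < (Ideal.absNorm p : ℝ) ∧ (Ideal.absNorm p : ℝ) ≤ x ^ β}, |e {p.1} x|)
      =o[atTop] fun x : ℝ => Real.sqrt (Real.log (Real.log x)))
    -- condition (d)
    (hd : (fun x : ℝ => (∑' p : {p : Ideal (NumberField.RingOfIntegers K) //
        p.IsPrime ∧ (Ideal.absNorm p : ℝ) ≤ y x}, lam p.1) - Real.log (Real.log x))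
      =o[atTop] fun x : ℝ => Real.sqrt (Real.log (Real.log x)))
    -- condition (e)
    (he : (fun x : ℝ => ∑' p : {p : Ideal (NumberField.RingOfIntegers K) //
        p.IsPrime ∧ (Ideal.absNorm p : ℝ) ≤ y x}, (lam p.1) ^ 2)
      =o[atTop] fun x : ℝ => Real.sqrt (Real.log (Real.log x)))
    -- condition (f)
    (hf : ∀ r u : ℕ, 1 ≤ u → u ≤ r →
      (fun x : ℝ => ∑' T : {T : Finset (Ideal (NumberField.RingOfIntegers K)) //
          T.card = u ∧ ∀ p ∈ T, p.IsPrime ∧ (Ideal.absNorm p : ℝ) ≤ y x}, |e T.1 x|)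
        =o[atTop] fun x : ℝ => Real.log (Real.log x) ^ (-(r : ℝ)/2))
    (γ : ℝ) :
    Tendsto (fun x : ℝ =>
      (Nat.card {m : Ideal (NumberField.RingOfIntegers K) //
          m ∈ S ∧ (Ideal.absNorm m : ℝ) ≤ x ∧ 3 ≤ Ideal.absNorm m ∧
          ((omegaI K m : ℝ) - Real.log (Real.log (Ideal.absNorm m))) /
            Real.sqrt (Real.log (Real.log (Ideal.absNorm m))) ≤ γ} : ℝ) /
        (countS K S x : ℝ)) atTop (𝓝 (gaussPhi γ)) := by
  classical
  set L : ℝ → ℝ := fun x => Real.log (Real.log x) with hLdef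
  have hL : Tendsto L atTop atTop := Real.tendsto_log_atTop.comp Real.tendsto_log_atTop
  have hsL : Tendsto (fun x => Real.sqrt (L x)) atTop atTop := Real.tendsto_sqrt_atTop.comp hL
  set A : ℝ → Finset (Ideal (NumberField.RingOfIntegers K)) :=
    fun x => (ekB K x).filter (· ∈ S) with hAdef
  have hAmem : ∀ x m, m ∈ A x ↔ m ∈ S ∧ (Ideal.absNorm m : ℝ) ≤ x := by
    intro x m; simp [hAdef, ekB_mem, and_comm]
  set P : ℝ → Finset (Ideal (NumberField.RingOfIntegers K)) :=
    fun x => (ekB K (y x)).filter (·.IsPrime) with hPdef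
  have hPmem : ∀ x p, p ∈ P x ↔ p.IsPrime ∧ (Ideal.absNorm p : ℝ) ≤ y x := by
    intro x m; simp [hPdef, ekB_mem, and_comm]
  set Q : ℝ → Finset (Ideal (NumberField.RingOfIntegers K)) :=
    fun x => (ekB K (x ^ β)).filter (fun p => p.IsPrime ∧ y x < (Ideal.absNorm p : ℝ)) with hQdef
  have hQmem : ∀ x p, p ∈ Q x ↔ p.IsPrime ∧ y x < (Ideal.absNorm p : ℝ) ∧
      (Ideal.absNorm p : ℝ) ≤ x ^ β := by
    intro x m; simp only [hQdef, ekB_mem, Finset.mem_filter]; tauto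
  have hcount : ∀ x, countS K S x = (A x).card := fun x => Nat.subtype_card _ (hAmem x)
  have hdens : ∀ (T : Finset (Ideal (NumberField.RingOfIntegers K))), (∀ p ∈ T, p.IsPrime) →
      ∀ x, (((A x).filter fun m => ∀ p ∈ T, p ∣ m).card : ℝ) / (A x).card =
        (∏ p ∈ T, lam p) + e T x := by
    intro T hT x
    rw [← hdensity T hT x, hcount]
    congr 2
    symm
    refine Nat.subtype_card _ fun m => ?_
    rw [Finset.mem_filter, hAmem, and_assoc]
  have hA : ∀ᶠ x in atTop, (A x).Nonempty := by
    obtain ⟨m, hm⟩ := hSinf.nonempty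
    filter_upwards [eventually_ge_atTop (Ideal.absNorm m : ℝ)] with x hx
    exact ⟨m, (hAmem x m).2 ⟨hm, hx⟩⟩
  -- the conditions as finite sums
  have hb' : Tendsto (fun x => (∑ p ∈ Q x, lam p) / Real.sqrt (L x)) atTop (𝓝 0) :=
    (hb.tendsto_div_nhds_zero).congr fun x => by rw [ek_tsum (Q x) (hQmem x)]
  have hc' : Tendsto (fun x => (∑ p ∈ Q x, |e {p} x|) / Real.sqrt (L x)) atTop (𝓝 0) :=
    (hc.tendsto_div_nhds_zero).congr fun x => by
      rw [ek_tsum (Q x) (hQmem x) (fun p => |e {p} x|)]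
  have hd' : Tendsto (fun x => (∑ p ∈ P x, lam p - L x) / Real.sqrt (L x)) atTop (𝓝 0) :=
    (hd.tendsto_div_nhds_zero).congr fun x => by rw [ek_tsum (P x) (hPmem x)]
  have he' : Tendsto (fun x => (∑ p ∈ P x, lam p ^ 2) / Real.sqrt (L x)) atTop (𝓝 0) :=
    (he.tendsto_div_nhds_zero).congr fun x => by
      rw [ek_tsum (P x) (hPmem x) (fun p => lam p ^ 2)]
  have hsq : Tendsto (fun x => (∑ p ∈ P x, lam p ^ 2) / L x) atTop (𝓝 0) := by
    have h1 := he'.mul (tendsto_inv_atTop_zero.comp hsL)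
    rw [mul_zero] at h1
    refine h1.congr' ?_
    filter_upwards [hL.eventually_ge_atTop 0] with x hx
    simp only [Function.comp]
    rw [← div_eq_mul_inv, div_div, Real.mul_self_sqrt hx]
  have herr0 : ∀ u N : ℕ, 1 ≤ u → Tendsto (fun x => L x ^ N * ∑ U ∈ (P x).powersetCard u,
      |e U x|) atTop (𝓝 0) := by
    intro u N hu
    have h1 := (hf (2 * N + u) u hu (by omega)).tendsto_div_nhds_zero
    refine squeeze_zero' ?_ ?_ h1
    · filter_upwards [hL.eventually_ge_atTop 0] with x hx
      exact mul_nonneg (pow_nonneg hx _) (Finset.sum_nonneg fun _ _ => abs_nonneg _)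
    · filter_upwards [hL.eventually_ge_atTop 1] with x hx
      rw [ek_tsum ((P x).powersetCard u) (fun T => by
        rw [Finset.mem_powersetCard, and_comm]
        refine and_congr_right fun _ => ?_
        exact forall₂_congr fun p _ => hPmem x p) (fun U => |e U x|)]
      change _ ≤ _ / L x ^ (-((2 * N + u : ℕ) : ℝ) / 2)
      rw [neg_div, Real.rpow_neg (by linarith), div_inv_eq_mul, mul_comm]
      refine mul_le_mul_of_nonneg_left ?_ (Finset.sum_nonneg fun _ _ => abs_nonneg _)
      rw [← Real.rpow_natCast]
      refine Real.rpow_le_rpow_of_exponent_le hx ?_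
      push_cast
      have : (0 : ℝ) ≤ u := Nat.cast_nonneg u
      linarith
  have herr : ∀ u N : ℕ, 1 ≤ u → Tendsto (fun x => L x ^ N * ∑ U ∈ (P x).powersetCard u,
      |(((A x).filter fun m => ∀ p ∈ U, p ∣ m).card : ℝ) / (A x).card - ∏ p ∈ U, lam p|)
        atTop (𝓝 0) := by
    intro u N hu
    refine (herr0 u N hu).congr fun x => ?_
    congr 1
    refine Finset.sum_congr rfl fun U hU => ?_
    rw [hdens U fun p hp => ((hPmem x p).1 ((Finset.mem_powersetCard.1 hU).1 hp)).1]
    congr 1; ring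
  have hmuTop : Tendsto (fun x => ∑ p ∈ P x, lam p) atTop atTop := by
    refine tendsto_atTop_mono' atTop (f₁ := fun x => L x - Real.sqrt (L x)) ?_ ?_
    · filter_upwards [hd'.eventually (lt_mem_nhds (show (-1 : ℝ) < 0 by norm_num)),
        hsL.eventually_gt_atTop 0] with x hx hx0
      rw [lt_div_iff₀ hx0] at hx
      linarith
    · have h1 : Tendsto (fun x => Real.sqrt (L x) * (Real.sqrt (L x) - 1)) atTop atTop :=
        hsL.atTop_mul_atTop₀ (tendsto_atTop_add_const_right _ (-1) hsL)
      refine h1.congr' ?_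
      filter_upwards [hL.eventually_ge_atTop 0] with x hx
      rw [mul_sub, Real.mul_self_sqrt hx, mul_one]
  have hlam : ∀ p : Ideal (NumberField.RingOfIntegers K), p.IsPrime → 0 ≤ lam p ∧ lam p ≤ 1 := by
    intro p hp
    have hfreq : ∃ᶠ x in atTop, (Ideal.absNorm p : ℝ) ≤ y x := by
      intro hcon
      have hbd : ∀ᶠ x in atTop, ∑ q ∈ P x, lam q ≤ ∑ q ∈ ekB K (Ideal.absNorm p), |lam q| := by
        filter_upwards [hcon] with x hx
        refine (Finset.sum_le_sum fun q _ => le_abs_self _).trans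
          (Finset.sum_le_sum_of_subset_of_nonneg ?_ fun _ _ _ => abs_nonneg _)
        intro q hq
        rw [ekB_mem]
        have := ((hPmem x q).1 hq).2
        linarith
      obtain ⟨x, h1, h2⟩ := (hbd.and (hmuTop.eventually_gt_atTop
        (∑ q ∈ ekB K (Ideal.absNorm p), |lam q|))).exists
      linarith
    have happ : ∀ ε > 0, ∃ d : ℝ, 0 ≤ d ∧ d ≤ 1 ∧ |d - lam p| < ε := by
      intro ε hε
      have h1 := (herr 1 0 le_rfl).eventually (gt_mem_nhds hε)
      obtain ⟨x, hx1, hx2⟩ := (hfreq.and_eventually h1).exists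
      refine ⟨(((A x).filter fun m => ∀ q ∈ ({p} : Finset _), q ∣ m).card : ℝ) / (A x).card,
        by positivity, div_le_one_of_le₀ (by exact_mod_cast Finset.card_filter_le _ _)
          (by positivity), ?_⟩
      refine lt_of_le_of_lt ?_ hx2
      rw [pow_zero, one_mul]
      have := Finset.single_le_sum (f := fun U : Finset (Ideal (NumberField.RingOfIntegers K)) =>
        |(((A x).filter fun m => ∀ p ∈ U, p ∣ m).card : ℝ) / (A x).card - ∏ p ∈ U, lam p|)
        (s := (P x).powersetCard 1) (fun _ _ => abs_nonneg _) (a := {p}) (by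
          rw [Finset.mem_powersetCard]
          exact ⟨by simpa using (hPmem x p).2 ⟨hp, hx1⟩, by simp⟩)
      simpa using this
    constructor
    · refine le_of_forall_pos_lt_add fun ε hε => ?_
      obtain ⟨d, h1, h2, h3⟩ := happ ε hε
      rw [abs_lt] at h3
      linarith
    · refine le_of_forall_pos_lt_add fun ε hε => ?_
      obtain ⟨d, h1, h2, h3⟩ := happ ε hε
      rw [abs_lt] at h3
      linarith
  have hcore := ek_core L A P (fun p m => p ∣ m) lam
    (Eventually.of_forall fun x p hp => hlam p ((hPmem x p).1 hp).1) hA hL hd' hsq herr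
  obtain ⟨C, hC⟩ := ha
  -- the number of prime divisors in the middle range
  set g : ℝ → Ideal (NumberField.RingOfIntegers K) → ℕ :=
    fun x m => ((Q x).filter fun p => p ∣ m).card with hgdef
  refine ek_limit_sandwich (fun γ x => (((A x).filter fun m =>
      (((P x).filter fun p => p ∣ m).card - L x) / Real.sqrt (L x) ≤ γ).card : ℝ) / (A x).card)
      _ hcore γ fun δ hδ => ?_
  set bad1 : ℝ → Finset (Ideal (NumberField.RingOfIntegers K)) :=
    fun x => A (x ^ ((1 : ℝ) / 2)) with hbad1
  set bad2 : ℝ → Finset (Ideal (NumberField.RingOfIntegers K)) :=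
    fun x => (A x).filter fun m => δ / 4 * Real.sqrt (L x) < g x m with hbad2
  have hb1 : Tendsto (fun x => ((bad1 x).card : ℝ) / (A x).card) atTop (𝓝 0) :=
    hShalf.tendsto_div_nhds_zero.congr fun x => by rw [hcount, hcount]
  have hb2 : Tendsto (fun x => ((bad2 x).card : ℝ) / (A x).card) atTop (𝓝 0) := by
    have hlim : Tendsto (fun x => 4 / δ * ((∑ p ∈ Q x, lam p) / Real.sqrt (L x) +
        (∑ p ∈ Q x, |e {p} x|) / Real.sqrt (L x))) atTop (𝓝 0) := by
      simpa using (hb'.add hc').const_mul (4 / δ)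
    refine squeeze_zero' (Eventually.of_forall fun x => by positivity) ?_ hlim
    filter_upwards [hA, hsL.eventually_gt_atTop 0] with x hAx hx0
    have hcard : (0 : ℝ) < (A x).card := by exact_mod_cast hAx.card_pos
    have m1 : (bad2 x).card * (δ / 4 * Real.sqrt (L x)) ≤ ∑ m ∈ A x, (g x m : ℝ) := by
      rw [← nsmul_eq_mul]
      refine (Finset.card_nsmul_le_sum (bad2 x) (fun m => (g x m : ℝ)) _
        fun m hm => (Finset.mem_filter.1 hm).2.le).trans ?_
      exact Finset.sum_le_sum_of_subset_of_nonneg (Finset.filter_subset _ _)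
        fun _ _ _ => Nat.cast_nonneg _
    have m2 : ∑ m ∈ A x, (g x m : ℝ) = ∑ p ∈ Q x, (((A x).filter fun m => p ∣ m).card : ℝ) := by
      simp only [hgdef, ← Finset.sum_boole]
      rw [Finset.sum_comm]
    have m3 : ∑ p ∈ Q x, (((A x).filter fun m => p ∣ m).card : ℝ) ≤
        (∑ p ∈ Q x, lam p + ∑ p ∈ Q x, |e {p} x|) * (A x).card := by
      rw [← Finset.sum_add_distrib, Finset.sum_mul]
      refine Finset.sum_le_sum fun p hp => ?_
      have := hdens {p} (by simpa using ((hQmem x p).1 hp).1) x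
      simp only [Finset.mem_singleton, forall_eq, Finset.prod_singleton] at this
      rw [div_eq_iff hcard.ne'] at this
      rw [this]
      gcongr
      exact le_abs_self _
    rw [div_le_iff₀ hcard, ← add_div]
    have m4 := m1.trans (m2.le.trans m3)
    rw [← le_div_iff₀ (by positivity)] at m4
    refine m4.trans (le_of_eq ?_)
    field_simp
  refine ⟨fun x => ((bad1 x).card : ℝ) / (A x).card + ((bad2 x).card : ℝ) / (A x).card,
    by simpa using hb1.add hb2, ?_⟩
  filter_upwards [hA, hL.eventually_ge_atTop 2, eventually_ge_atTop (9 : ℝ),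
    hsL.eventually_ge_atTop (4 / δ * C), hsL.eventually_ge_atTop (2 / δ * (|γ| + 1))]
    with x hAx hLx hx9 hxC hxγ
  have hcard : (0 : ℝ) < (A x).card := by exact_mod_cast hAx.card_pos
  have hx1 : 1 < x := by linarith
  have hCx : C ≤ δ / 4 * Real.sqrt (L x) := by
    calc C = δ / 4 * (4 / δ * C) := by field_simp
      _ ≤ _ := by gcongr
  have hγx : |γ| + 1 ≤ δ / 2 * Real.sqrt (L x) := by
    calc |γ| + 1 = δ / 2 * (2 / δ * (|γ| + 1)) := by field_simp
      _ ≤ _ := by gcongr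
  set G : Finset (Ideal (NumberField.RingOfIntegers K)) := (A x).filter fun m =>
    3 ≤ Ideal.absNorm m ∧ ((omegaI K m : ℝ) - Real.log (Real.log (Ideal.absNorm m))) /
            Real.sqrt (Real.log (Real.log (Ideal.absNorm m))) ≤ γ with hGdef
  have hG : Nat.card {m : Ideal (NumberField.RingOfIntegers K) //
          m ∈ S ∧ (Ideal.absNorm m : ℝ) ≤ x ∧ 3 ≤ Ideal.absNorm m ∧
          ((omegaI K m : ℝ) - Real.log (Real.log (Ideal.absNorm m))) /
            Real.sqrt (Real.log (Real.log (Ideal.absNorm m))) ≤ γ} = G.card :=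
    Nat.subtype_card _ fun m => by rw [hGdef, Finset.mem_filter, hAmem, and_assoc]
  rw [hG, hcount]
  have hpt : ∀ m ∈ A x, m ∉ bad1 x → m ∉ bad2 x → 3 ≤ Ideal.absNorm m ∧
      ((((omegaI K m : ℝ) - Real.log (Real.log (Ideal.absNorm m))) /
            Real.sqrt (Real.log (Real.log (Ideal.absNorm m))) ≤ γ →
        (((P x).filter fun p => p ∣ m).card - L x) / Real.sqrt (L x) ≤ γ + δ) ∧
      ((((P x).filter fun p => p ∣ m).card - L x) / Real.sqrt (L x) ≤ γ - δ →
        ((omegaI K m : ℝ) - Real.log (Real.log (Ideal.absNorm m))) /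
            Real.sqrt (Real.log (Real.log (Ideal.absNorm m))) ≤ γ)) := by
    intro m hm hm1 hm2
    obtain ⟨hmS, hmx⟩ := (hAmem x m).1 hm
    have hm0 : m ≠ 0 := fun h => hS0 (h ▸ hmS)
    have hmlow : x ^ ((1 : ℝ) / 2) < Ideal.absNorm m := by
      by_contra hcon
      exact hm1 ((hAmem _ m).2 ⟨hmS, not_lt.1 hcon⟩)
    have hx3 : (3 : ℝ) ≤ x ^ ((1 : ℝ) / 2) := by
      rw [← Real.sqrt_eq_rpow]
      exact Real.le_sqrt_of_sq_le (by linarith)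
    have h3 : (3 : ℝ) < Ideal.absNorm m := lt_of_le_of_lt hx3 hmlow
    refine ⟨by exact_mod_cast h3.le, ?_⟩
    have hgm : (g x m : ℝ) ≤ δ / 4 * Real.sqrt (L x) := by
      by_contra hcon
      exact hm2 (Finset.mem_filter.2 ⟨hm, not_le.1 hcon⟩)
    have hlogx : 0 < Real.log x := Real.log_pos hx1
    have hl2 : Real.log (Real.log (Ideal.absNorm m)) ≤ L x :=
      Real.log_le_log (Real.log_pos (by linarith)) (Real.log_le_log (by linarith) hmx)
    have hl1 : L x - 1 ≤ Real.log (Real.log (Ideal.absNorm m)) := by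
      have h1 : Real.log x / 2 ≤ Real.log (Ideal.absNorm m) := by
        have := Real.log_le_log (by linarith) hmlow.le
        rw [Real.log_rpow (by linarith)] at this
        linarith
      have h2 := Real.log_le_log (by positivity) h1
      rw [Real.log_div hlogx.ne' two_ne_zero] at h2
      have h3 := Real.log_two_lt_d9
      change Real.log (Real.log x) - 1 ≤ _
      linarith
    -- decomposition of omega
    set D : Finset (Ideal (NumberField.RingOfIntegers K)) :=
      (ekB K x).filter fun p => p.IsPrime ∧ p ∣ m with hD
    have hDmem : ∀ p, p ∈ D ↔ p.IsPrime ∧ p ∣ m := by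
      intro p
      rw [hD, Finset.mem_filter, ekB_mem]
      exact ⟨fun h => h.2, fun h => ⟨(ek_norm_le K p m hm0 h.2).trans hmx, h⟩⟩
    have hom : omegaI K m = D.card := Nat.subtype_card _ hDmem
    set H : ℕ := Nat.card {p : Ideal (NumberField.RingOfIntegers K) //
        p.IsPrime ∧ x ^ β < (Ideal.absNorm p : ℝ) ∧ p ∣ m} with hH
    have hHC : (H : ℝ) ≤ C := hC x hx1 m hmS hmx
    have hyx := (hy x hx1).2
    have hHcard : H = ((D.filter fun p => ¬ (Ideal.absNorm p : ℝ) ≤ y x).filter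
        fun p => ¬ (Ideal.absNorm p : ℝ) ≤ x ^ β).card :=
      Nat.subtype_card _ fun p => by
        simp only [Finset.mem_filter, hDmem, not_le]
        constructor
        · rintro ⟨⟨⟨a, b⟩, c⟩, d⟩; exact ⟨a, d, b⟩
        · rintro ⟨a, d, b⟩; exact ⟨⟨⟨a, b⟩, hyx.trans d⟩, d⟩
    have hgcard : (D.filter fun p => ¬ (Ideal.absNorm p : ℝ) ≤ y x).filter
        (fun p => (Ideal.absNorm p : ℝ) ≤ x ^ β) = (Q x).filter fun p => p ∣ m := by
      ext p
      simp only [Finset.mem_filter, hDmem, hQmem, not_le]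
      tauto
    have hfcard : D.filter (fun p => (Ideal.absNorm p : ℝ) ≤ y x) =
        (P x).filter fun p => p ∣ m := by
      ext p
      simp only [Finset.mem_filter, hDmem, hPmem]
      tauto
    have hsplit : (omegaI K m : ℝ) = ((P x).filter fun p => p ∣ m).card + (g x m : ℝ) + (H : ℝ) := by
      rw [hom, hHcard, hgdef]
      rw [← Finset.card_filter_add_card_filter_not (s := D)
        (fun p => (Ideal.absNorm p : ℝ) ≤ y x), hfcard,
        ← Finset.card_filter_add_card_filter_not
        (s := D.filter fun p => ¬ (Ideal.absNorm p : ℝ) ≤ y x)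
        (fun p => (Ideal.absNorm p : ℝ) ≤ x ^ β), hgcard]
      push_cast
      ring
    rw [hsplit]
    exact ek_pointwise γ δ (L x) _ _ _ _ C hδ hl1 hl2 hLx (Nat.cast_nonneg _) hgm
      (Nat.cast_nonneg _) hHC hCx hγx
  have hunion : ∀ U V : Finset (Ideal (NumberField.RingOfIntegers K)),
      U ⊆ V ∪ (bad1 x ∪ bad2 x) → (U.card : ℝ) / (A x).card ≤ (V.card : ℝ) / (A x).card +
        (((bad1 x).card : ℝ) / (A x).card + ((bad2 x).card : ℝ) / (A x).card) := by
    intro U V hUV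
    rw [← add_div, ← add_div]
    gcongr
    have h1 := Finset.card_le_card hUV
    have h2 := Finset.card_union_le V (bad1 x ∪ bad2 x)
    have h3 := Finset.card_union_le (bad1 x) (bad2 x)
    exact_mod_cast h1.trans (h2.trans (by omega))
  constructor
  · rw [sub_le_iff_le_add]
    refine hunion _ G fun m hm => ?_
    obtain ⟨hmA, hmc⟩ := Finset.mem_filter.1 hm
    by_cases h1 : m ∈ bad1 x
    · simp [h1]
    by_cases h2 : m ∈ bad2 x
    · simp [h2]
    obtain ⟨k1, _, k3⟩ := hpt m hmA h1 h2
    exact Finset.mem_union_left _ (Finset.mem_filter.2 ⟨hmA, k1, k3 hmc⟩)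
  · refine hunion G _ fun m hm => ?_
    obtain ⟨hmA, _, hmc⟩ := Finset.mem_filter.1 hm
    by_cases h1 : m ∈ bad1 x
    · simp [h1]
    by_cases h2 : m ∈ bad2 x
    · simp [h2]
    obtain ⟨_, k2, _⟩ := hpt m hmA h1 h2
    exact Finset.mem_union_left _ (Finset.mem_filter.2 ⟨hmA, k2 hmc⟩)

end
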